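/- arXiv:math/0602319 — 2 statements merged into one kernel-verified Lean document; each statement's English description precedes it below -/
import Mathlib

section
/- Let G1 be a k1-regular finite simple graph on n1 vertices (not necessarily connected) with k1 even, and let G2 be a finite simple graph (not necessarily connected) whose maximum degree is at most k2 and whose minimum degree is at least 1. If k1²/2 > k2, then the Cartesian product G1 × G2 is antimagic. -/
/-- The vertex sum at `v` under an edge labeling `f`: the sum of the labels of all
edges incident with `v`. -/
noncomputable def vertexSum {V : Type*} [Finite V] (G : SimpleGraph V)
    (f : Sym2 V → ℕ) (v : V) : ℕ :=
  ∑ e ∈ (G.incidenceSet v).toFinite.toFinset, f e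

/-- A graph is antimagic if there is a bijection from its edge set to `{1, ..., m}`
(`m` = number of edges) such that all vertex sums are pairwise distinct. -/
def IsAntimagic {V : Type*} [Finite V] (G : SimpleGraph V) : Prop :=
  ∃ f : Sym2 V → ℕ,
    Set.BijOn f G.edgeSet (Set.Icc 1 (Nat.card G.edgeSet)) ∧
    ∀ u v : V, u ≠ v → vertexSum G f u ≠ vertexSum G f v

open Finset in
theorem hall_aux {E A B : Type*} [DecidableEq E] [DecidableEq A] [DecidableEq B]
    (S : Finset E) (a : E → A) (b : E → B) (d : ℕ) (hd : 0 < d)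
    (ha : ∀ x, (S.filter (fun e => a e = x)).card = d)
    (hb : ∀ y, (S.filter (fun e => b e = y)).card ≤ d) :
    ∃ M : A → E, (∀ x, M x ∈ S ∧ a (M x) = x) ∧ Function.Injective (fun x => b (M x)) := by
  have key := (Finset.all_card_le_biUnion_card_iff_exists_injective
    (fun x : A => (S.filter (fun e => a e = x)).image b)).1 (by
      intro T
      set U := T.biUnion (fun x : A => (S.filter (fun e => a e = x)).image b) with hU
      have h1 : (S.filter (fun e => a e ∈ T)).card = T.card * d := by
        rw [Finset.card_eq_sum_card_fiberwise (f := a) (t := T)]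
        · rw [Finset.sum_const_nat (m := d)]
          intro x hx
          rw [← ha x]
          congr 1
          ext e
          simp only [mem_filter]
          constructor
          · rintro ⟨⟨h1, h2⟩, h3⟩; exact ⟨h1, h3⟩
          · rintro ⟨h1, h2⟩; exact ⟨⟨h1, h2 ▸ hx⟩, h2⟩
        · intro e he
          simpa using (Finset.mem_filter.1 he).2
      have h2 : (S.filter (fun e => a e ∈ T)).card ≤ U.card * d := by
        rw [Finset.card_eq_sum_card_fiberwise (f := b) (t := U)]
        · rw [← smul_eq_mul]
          apply Finset.sum_le_card_nsmul
          intro y hy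
          refine le_trans (Finset.card_le_card ?_) (hb y)
          intro e
          simp only [mem_filter]
          rintro ⟨⟨h1, h2⟩, h3⟩; exact ⟨h1, h3⟩
        · intro e he
          have he := Finset.mem_filter.1 he
          simp only [hU, Finset.coe_biUnion, Set.mem_iUnion]
          refine ⟨a e, he.2, ?_⟩
          simp only [coe_image, Set.mem_image]
          exact ⟨e, by simp [he.1], rfl⟩
      rw [h1] at h2
      exact Nat.le_of_mul_le_mul_right h2 hd)
  obtain ⟨f, hf, hf'⟩ := key
  simp only [mem_image, mem_filter] at hf'
  choose M hM using hf'
  refine ⟨M, fun x => (hM x).1, ?_⟩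
  have : (fun x => b (M x)) = f := by funext x; exact (hM x).2
  rw [this]; exact hf

open Finset in
theorem decomp_aux {E V : Type*} [DecidableEq E] [DecidableEq V] [Fintype V] [Nonempty E]
    (a b : E → V) (r : ℕ) : ∀ (S : Finset E)
    (_ : ∀ x, (S.filter (fun e => a e = x)).card = r)
    (_ : ∀ y, (S.filter (fun e => b e = y)).card = r),
    ∃ M : ℕ → V → E, (∀ i < r, ∀ v, M i v ∈ S ∧ a (M i v) = v) ∧
      (∀ i < r, Function.Injective (fun v => b (M i v))) ∧
      (∀ i < r, ∀ j < r, ∀ v, M i v = M j v → i = j) := by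
  induction r with
  | zero =>
    intro S ha hb
    exact ⟨fun _ _ => Classical.arbitrary E, by simp, by simp, by simp⟩
  | succ r ih =>
    intro S ha hb
    obtain ⟨N, hN, hNi⟩ := hall_aux S a b (r+1) (by omega) ha (fun y => (hb y).le)
    have hNs : Function.Surjective (fun x => b (N x)) := Finite.surjective_of_injective hNi
    obtain ⟨M, h1, h2, h3⟩ := ih (S.filter (fun e => N (a e) ≠ e)) (by
      intro x
      have : (S.filter (fun e => N (a e) ≠ e)).filter (fun e => a e = x)
          = (S.filter (fun e => a e = x)).erase (N x) := by
        ext e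
        simp only [mem_filter, mem_erase]
        constructor
        · rintro ⟨⟨h1, h2⟩, rfl⟩; exact ⟨fun h => h2 h.symm, h1, rfl⟩
        · rintro ⟨h1, h2, rfl⟩; exact ⟨⟨h2, fun h => h1 h.symm⟩, rfl⟩
      rw [this, card_erase_of_mem (by simp [hN x]), ha]; rfl) (by
      intro y
      obtain ⟨x, hx⟩ := hNs y
      simp only at hx
      have : (S.filter (fun e => N (a e) ≠ e)).filter (fun e => b e = y)
          = (S.filter (fun e => b e = y)).erase (N x) := by
        ext e
        simp only [mem_filter, mem_erase]
        constructor
        · rintro ⟨⟨h1, h2⟩, h3⟩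
          refine ⟨fun h => h2 ?_, h1, h3⟩
          rw [h, (hN x).2]
        · rintro ⟨h1, h2, h3⟩
          refine ⟨⟨h2, fun h => h1 ?_⟩, h3⟩
          have : a e = x := hNi (by simp only [h, h3, hx])
          rw [← this, h]
      rw [this, card_erase_of_mem (by simp [hN x, hx]), hb]; rfl)
    refine ⟨fun i => if i = r then N else M i, ?_, ?_, ?_⟩
    · intro i hi v
      by_cases h : i = r
      · simp only [h, if_true]; exact hN v
      · simp only [h, if_false]
        have := h1 i (by omega) v
        exact ⟨(mem_filter.1 this.1).1, this.2⟩
    · intro i hi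
      by_cases h : i = r
      · simp only [h, if_true]; exact hNi
      · simp only [h, if_false]
        exact h2 i (by omega)
    · have aux : ∀ i < r, ∀ v, N v ≠ M i v := by
        intro i hi v hv
        have := h1 i hi v
        refine (mem_filter.1 this.1).2 ?_
        rw [this.2, hv]
      intro i hi j hj v
      by_cases h : i = r <;> by_cases h' : j = r <;> simp only [h, h', if_true, if_false]
      · simp
      · intro hh; exact (aux j (by omega) v hh).elim
      · intro hh; exact (aux i (by omega) v hh.symm).elim
      · intro hh; exact h3 i (by omega) j (by omega) v hh

open Finset in
theorem petersen_aux {V : Type*} [Fintype V] [Nonempty V] [DecidableEq V] (G : SimpleGraph V)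
    [DecidableRel G.Adj] (r : ℕ) (hr : 0 < r) (hreg : ∀ v, G.degree v = 2 * r) :
    ∃ σ : ℕ → Equiv.Perm V,
      Function.Injective (fun p : Fin r × V => s(p.2, σ p.1 p.2)) ∧
      Set.range (fun p : Fin r × V => s(p.2, σ p.1 p.2)) = G.edgeSet := by
  classical
  have hcard : Fintype.card G.edgeSet = r * Fintype.card V := by
    have := G.sum_degrees_eq_twice_card_edges
    simp only [hreg, sum_const, card_univ, smul_eq_mul] at this
    rw [← SimpleGraph.edgeFinset_card]
    nlinarith
  obtain ⟨M, hM, hMi⟩ := hall_aux (univ : Finset (G.Dart × Fin r))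
    (fun p => (⟨p.1.edge, p.1.edge_mem⟩ : G.edgeSet)) (fun p => (p.1.fst, p.2)) (2 * r) (by omega)
    (by
      intro x
      have : (univ.filter (fun p : G.Dart × Fin r => (⟨p.1.edge, p.1.edge_mem⟩ : G.edgeSet) = x))
        = (univ.filter (fun d : G.Dart => d.edge = x.1)) ×ˢ (univ : Finset (Fin r)) := by
        ext p; simp [Subtype.ext_iff]
      rw [this, card_product, G.dart_edge_fiber_card x.1 x.2]; simp)
    (by
      intro y
      have : (univ.filter (fun p : G.Dart × Fin r => (p.1.fst, p.2) = y))
        = (univ.filter (fun d : G.Dart => d.fst = y.1)) ×ˢ {y.2} := by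
        ext p; simp [Prod.ext_iff]; intro _; exact eq_comm
      rw [this, card_product, G.dart_fst_fiber_card_eq_degree y.1, hreg]; simp)
  have hbij : Function.Bijective (fun x : G.edgeSet => ((M x).1.fst, (M x).2)) := by
    rw [Fintype.bijective_iff_injective_and_card]
    refine ⟨hMi, ?_⟩
    rw [hcard]; simp [mul_comm]
  set tail : G.edgeSet → V := fun x => (M x).1.fst with htail
  set head : G.edgeSet → V := fun x => (M x).1.snd with hhead
  have hth : ∀ x : G.edgeSet, s(tail x, head x) = x.1 := by
    intro x
    have := (hM x).2
    exact congrArg Subtype.val this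
  have hne : ∀ x : G.edgeSet, tail x ≠ head x := fun x => (M x).1.adj.ne
  have ht : ∀ v, (univ.filter (fun e => tail e = v)).card = r := by
    intro v
    have : (univ.filter (fun e => tail e = v)).card =
        (({v} : Finset V) ×ˢ (univ : Finset (Fin r))).card := by
      apply Finset.card_bijective _ hbij
      intro e; simp [htail]; exact eq_comm
    rw [this]; simp
  have hh : ∀ v, (univ.filter (fun e => head e = v)).card = r := by
    intro v
    have h1 : (univ.filter (fun e : G.edgeSet => v ∈ e.1)).card = 2 * r := by
      rw [← hreg v, ← G.card_incidenceFinset_eq_degree v]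
      apply Finset.card_bij (fun e _ => e.1)
      · intro e he
        simp only [mem_filter, mem_univ, true_and] at he
        simp [SimpleGraph.incidenceSet, he, e.2]
      · intro e _ e' _ h; exact Subtype.ext h
      · intro e he
        simp [SimpleGraph.incidenceSet] at he
        exact ⟨⟨e, he.1⟩, by simp [he.2], rfl⟩
    have h2 : (univ.filter (fun e : G.edgeSet => v ∈ e.1)) =
      (univ.filter (fun e => tail e = v)) ∪ (univ.filter (fun e => head e = v)) := by
      ext e
      simp only [mem_filter, mem_univ, true_and, mem_union]
      rw [← hth e, Sym2.mem_iff]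
      simp only [eq_comm]
    rw [h2, card_union_of_disjoint, ht v] at h1
    · omega
    · rw [Finset.disjoint_filter]
      rintro e _ h rfl
      exact hne e h
  have hEn : Nonempty G.edgeSet := by
    rw [← Fintype.card_pos_iff, hcard]
    exact Nat.mul_pos hr Fintype.card_pos
  obtain ⟨N, h1, h2, h3⟩ := decomp_aux tail head r univ ht hh
  refine ⟨fun i => if h : i < r then
    Equiv.ofBijective _ (Finite.injective_iff_bijective.1 (h2 i h)) else 1, ?_⟩
  have hval : (fun p : Fin r × V => s(p.2, (if h : p.1.1 < r then
    Equiv.ofBijective _ (Finite.injective_iff_bijective.1 (h2 p.1.1 h)) else 1 : Equiv.Perm V) p.2))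
     = fun p : Fin r × V => (N p.1 p.2).1 := by
    funext p
    rw [dif_pos p.1.2, Equiv.ofBijective_apply, ← hth (N p.1 p.2), (h1 p.1 p.1.2 p.2).2]
  rw [hval]
  have hinj : Function.Injective (fun p : Fin r × V => N p.1 p.2) := by
    rintro ⟨i, v⟩ ⟨j, w⟩ h
    simp only at h
    have hv : v = w := by
      rw [← (h1 i i.2 v).2, ← (h1 j j.2 w).2, h]
    subst hv
    have := h3 i i.2 j j.2 v h
    rw [Fin.ext this]
  have hb : Function.Bijective (fun p : Fin r × V => N p.1 p.2) := by
    rw [Fintype.bijective_iff_injective_and_card]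
    exact ⟨hinj, by rw [hcard]; simp⟩
  refine ⟨Subtype.val_injective.comp hinj, ?_⟩
  ext e
  constructor
  · rintro ⟨p, rfl⟩; exact (N p.1 p.2).2
  · intro he
    obtain ⟨p, hp⟩ := hb.2 ⟨e, he⟩
    exact ⟨p, congrArg Subtype.val hp⟩

open Finset in
theorem band_aux {V : Type*} [DecidableEq V] [Finite V] (ρ : Equiv.Perm V) (k : ℕ) :
    ∀ S : Finset V, S.card = k → (∀ v ∈ S, ρ v ∈ S) →
    ∃ x : V → ℕ, Set.InjOn x S ∧ (∀ v ∈ S, x v < S.card) ∧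
      ∀ v ∈ S, x v ≤ x (ρ v) + 2 ∧ x (ρ v) ≤ x v + 2 := by
  induction k using Nat.strong_induction_on with
  | _ k ih =>
  intro S hk hS
  rcases S.eq_empty_or_nonempty with rfl | ⟨v, hv⟩
  · exact ⟨fun _ => 0, by simp, by simp, by simp⟩
  set L := Function.minimalPeriod ρ v with hL
  have hper : v ∈ Function.periodicPts ρ := by
    have := (isOfFinOrder_of_finite ρ)
    obtain ⟨n, hn, h⟩ := isOfFinOrder_iff_pow_eq_one.1 this
    refine ⟨n, hn, ?_⟩
    have h2 := congrArg (fun τ : Equiv.Perm V => τ v) h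
    simpa [Function.IsPeriodicPt, Function.IsFixedPt, Equiv.Perm.iterate_eq_pow] using h2
  have hLpos : 0 < L := Function.minimalPeriod_pos_of_mem_periodicPts hper
  have hLv : ρ^[L] v = v := Function.iterate_minimalPeriod
  have hinj : ∀ i < L, ∀ j < L, ρ^[i] v = ρ^[j] v → i = j := fun i hi j hj h =>
    Function.iterate_injOn_Iio_minimalPeriod (f := ρ) (x := v) hi hj h
  set O := (range L).image (fun i => ρ^[i] v) with hO
  have hmemO : ∀ w, w ∈ O ↔ ∃ i < L, ρ^[i] v = w := by simp [hO]
  have hOcard : O.card = L := by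
    rw [hO, card_image_of_injOn, card_range]
    intro i hi j hj h
    exact hinj i (by simpa using hi) j (by simpa using hj) h
  have hOS : O ⊆ S := by
    intro w hw
    obtain ⟨i, -, rfl⟩ := (hmemO w).1 hw
    clear hw
    induction i with
    | zero => simpa
    | succ i ih => rw [Function.iterate_succ_apply']; exact hS _ ih
  have hOρ : ∀ w, ρ w ∈ O ↔ w ∈ O := by
    intro w
    rw [hmemO, hmemO]
    constructor
    · rintro ⟨i, hi, h⟩
      rcases i with _ | i
      · refine ⟨L - 1, by omega, ρ.injective ?_⟩
        rw [← Function.iterate_succ_apply' ρ, ← h, Nat.succ_eq_add_one, Nat.sub_add_cancel hLpos, hLv]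
        rfl
      · refine ⟨i, by omega, ρ.injective ?_⟩
        rw [← h, Function.iterate_succ_apply']
    · rintro ⟨i, hi, rfl⟩
      by_cases h : i + 1 < L
      · exact ⟨i + 1, h, Function.iterate_succ_apply' ρ _ _⟩
      · refine ⟨0, hLpos, ?_⟩
        rw [← Function.iterate_succ_apply' ρ]
        have : i.succ = L := by omega
        rw [this, hLv]; rfl
  have hcS : (S \ O).card + L = S.card := by
    rw [← hOcard]; exact card_sdiff_add_card_eq_card hOS
  obtain ⟨x, hx1, hx2, hx3⟩ := ih (S \ O).card (by omega) (S \ O) rfl (by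
    intro w hw
    rw [mem_sdiff] at hw ⊢
    exact ⟨hS w hw.1, fun h => hw.2 ((hOρ w).1 h)⟩)
  have hidx : ∀ w, ∃ i, w ∈ O → i < L ∧ ρ^[i] v = w := by
    intro w
    by_cases h : w ∈ O
    · obtain ⟨i, hi⟩ := (hmemO w).1 h
      exact ⟨i, fun _ => hi⟩
    · exact ⟨0, fun h' => (h h').elim⟩
  choose idx hidx using hidx
  have hnext : ∀ w ∈ O, idx (ρ w) = if idx w + 1 < L then idx w + 1 else 0 := by
    intro w hw
    obtain ⟨h1, h2⟩ := hidx w hw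
    obtain ⟨h3, h4⟩ := hidx (ρ w) ((hOρ w).2 hw)
    split_ifs with h
    · apply hinj _ h3 _ h
      rw [h4, Function.iterate_succ_apply', h2]
    · apply hinj _ h3 _ hLpos
      rw [h4, ← h2, ← Function.iterate_succ_apply' ρ]
      have : (idx w).succ = L := by omega
      rw [this, hLv]; rfl
  let y : V → ℕ := fun w => if w ∈ O then
    (S \ O).card + (if 2 * idx w < L then 2 * idx w else 2 * L - 2 * idx w - 1) else x w
  have hy1 : ∀ w ∈ O, y w = (S \ O).card + (if 2 * idx w < L then 2 * idx w else 2 * L - 2 * idx w - 1) :=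
    fun w hw => if_pos hw
  have hy2 : ∀ w, w ∉ O → y w = x w := fun w hw => if_neg hw
  refine ⟨y, ?_, ?_, ?_⟩
  · intro w hw w' hw' h
    rw [mem_coe] at hw hw'
    by_cases h1 : w ∈ O <;> by_cases h2 : w' ∈ O
    · rw [hy1 w h1, hy1 w' h2] at h
      obtain ⟨a1, a2⟩ := hidx w h1
      obtain ⟨b1, b2⟩ := hidx w' h2
      have : idx w = idx w' := by
        split_ifs at h <;> omega
      rw [← a2, ← b2, this]
    · have := hx2 w' (by simp [hw', h2])
      rw [hy1 w h1, hy2 w' h2] at h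
      omega
    · have := hx2 w (by simp [hw, h1])
      rw [hy1 w' h2, hy2 w h1] at h
      omega
    · rw [hy2 w h1, hy2 w' h2] at h
      exact hx1 (by simp [hw, h1]) (by simp [hw', h2]) h
  · intro w hw
    by_cases h1 : w ∈ O
    · obtain ⟨a1, a2⟩ := hidx w h1
      rw [hy1 w h1]
      split_ifs <;> omega
    · have := hx2 w (by simp [hw, h1])
      rw [hy2 w h1]
      omega
  · intro w hw
    by_cases h1 : w ∈ O
    · obtain ⟨a1, a2⟩ := hidx w h1
      rw [hy1 w h1, hy1 _ ((hOρ w).2 h1), hnext w h1]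
      split_ifs <;> omega
    · rw [hy2 w h1, hy2 _ (fun h => h1 ((hOρ w).1 h))]
      exact hx3 w (by simp [hw, h1])

theorem toEquiv_aux {V : Type*} [Fintype V] (x : V → ℕ) (hx : Function.Injective x)
    (hlt : ∀ v, x v < Fintype.card V) :
    ∃ e : V ≃ Fin (Fintype.card V), ∀ v, (e v : ℕ) = x v := by
  refine ⟨Equiv.ofBijective (fun v => ⟨x v, hlt v⟩) ?_, fun v => rfl⟩
  rw [Fintype.bijective_iff_injective_and_card]
  refine ⟨fun v w h => hx (by simpa using h), by simp⟩

theorem band {V : Type*} [Fintype V] (ρ : Equiv.Perm V) :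
    ∃ x : V ≃ Fin (Fintype.card V), ∀ v,
      (x v : ℕ) ≤ x (ρ v) + 2 ∧ (x (ρ v) : ℕ) ≤ x v + 2 := by
  classical
  obtain ⟨x, h1, h2, h3⟩ := band_aux ρ _ Finset.univ rfl (by simp)
  obtain ⟨e, he⟩ := toEquiv_aux x (by simpa using h1) (by simpa using h2)
  exact ⟨e, fun v => by simpa [he] using h3 v⟩

/-- one fixed-point-free permutation -/
theorem single_aux {V : Type*} [Fintype V] (σ : Equiv.Perm V) (hσ : ∀ v, σ v ≠ v) :
    ∃ x : V ≃ Fin (Fintype.card V), ∃ c : ℕ, ∀ u,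
      c ≤ (x u : ℕ) + x (σ.symm u) ∧ (x u : ℕ) + x (σ.symm u) ≤ c + Fintype.card V := by
  classical
  obtain ⟨A, hA⟩ : ∃ A : Finset V, Maximal (fun A : Finset V => ∀ v ∈ A, σ v ∉ A) A := by
    have := (Set.toFinite {A : Finset V | ∀ v ∈ A, σ v ∉ A}).exists_maximal ⟨∅, by simp⟩
    exact this
  have hA1 : ∀ v ∈ A, σ v ∉ A := hA.prop
  have hA2 : ∀ v, v ∉ A → σ.symm v ∉ A → σ v ∈ A := by
    intro v h1 h2
    by_contra h3
    have := hA.le_of_ge (y := insert v A) (by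
      intro w hw
      rw [Finset.mem_insert] at hw
      rw [Finset.mem_insert, not_or]
      rcases hw with rfl | hw
      · exact ⟨hσ _, h3⟩
      · refine ⟨?_, hA1 w hw⟩
        rintro rfl
        simp [hw] at h2) (Finset.subset_insert _ _)
    exact h1 (this (Finset.mem_insert_self _ _))
  -- leftovers
  set B := Finset.univ.filter (fun v => v ∉ A ∧ σ.symm v ∉ A) with hB
  have hBm : ∀ v, v ∈ B ↔ v ∉ A ∧ σ.symm v ∉ A := by simp [hB]
  set B' := B.image σ with hB'
  have hB'A : B' ⊆ A := by
    intro w hw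
    obtain ⟨v, hv, rfl⟩ := Finset.mem_image.1 hw
    exact hA2 v ((hBm v).1 hv).1 ((hBm v).1 hv).2
  have hB'c : B'.card = B.card := Finset.card_image_of_injective _ σ.injective
  set k := B.card with hk
  set M := A.card with hM
  have hn : Fintype.card V = 2 * M + k := by
    have h1 : (Finset.univ : Finset V) = A ∪ (A.image σ ∪ B) := by
      ext v
      simp only [Finset.mem_univ, Finset.mem_union, Finset.mem_image, hBm, true_iff]
      by_cases h1 : v ∈ A
      · exact Or.inl h1
      by_cases h2 : σ.symm v ∈ A
      · exact Or.inr (Or.inl ⟨_, h2, by simp⟩)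
      · exact Or.inr (Or.inr ⟨h1, h2⟩)
    have h2 : Disjoint (A.image σ) B := by
      rw [Finset.disjoint_left]
      intro v hv hv'
      obtain ⟨w, hw, rfl⟩ := Finset.mem_image.1 hv
      have := ((hBm _).1 hv').2
      simp [hw] at this
    have h3 : Disjoint A (A.image σ ∪ B) := by
      rw [Finset.disjoint_left]
      intro v hv hv'
      rcases Finset.mem_union.1 hv' with h | h
      · obtain ⟨w, hw, rfl⟩ := Finset.mem_image.1 h
        exact hA1 w hw hv
      · exact ((hBm v).1 h).1 hv
    rw [← Finset.card_univ, h1, Finset.card_union_of_disjoint h3, Finset.card_union_of_disjoint h2,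
      Finset.card_image_of_injective _ σ.injective]
    omega
  have hkM : k ≤ M := by rw [← hB'c]; exact Finset.card_le_card hB'A
  -- enumerations
  have hAB : (A \ B').card = M - k := by
    rw [Finset.card_sdiff_of_subset hB'A, hB'c]
  let eB := B.equivFin
  let eR := (A \ B').equivFin
  have hb : ∃ b : V → ℕ, (∀ v ∈ B, b v < k) ∧ Set.InjOn b B := by
    refine ⟨fun v => if h : v ∈ B then (eB ⟨v, h⟩ : ℕ) else 0, ?_, ?_⟩
    · intro v hv; simp only [hv, dif_pos]; exact (eB ⟨v, hv⟩).2
    · intro v hv w hw h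
      rw [Finset.mem_coe] at hv hw
      simp only [hv, hw, dif_pos] at h
      simpa using eB.injective (Fin.ext h)
  have hr : ∃ b : V → ℕ, (∀ v ∈ A \ B', b v < M - k) ∧ Set.InjOn b (A \ B' : Finset V) := by
    refine ⟨fun v => if h : v ∈ A \ B' then (eR ⟨v, h⟩ : ℕ) else 0, ?_, ?_⟩
    · intro v hv; simp only [hv, dif_pos]; have := (eR ⟨v, hv⟩).2; omega
    · intro v hv w hw h
      rw [Finset.mem_coe] at hv hw
      simp only [hv, hw, dif_pos] at h
      simpa using eR.injective (Fin.ext h)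
  obtain ⟨b, hb1, hb2⟩ := hb
  obtain ⟨q, hq1, hq2⟩ := hr
  -- index of the elements of A
  let a : V → ℕ := fun v => if v ∈ B' then b (σ.symm v) else k + q v
  have hσB : ∀ v, v ∈ B' ↔ σ.symm v ∈ B := by
    intro v
    rw [hB', Finset.mem_image]
    constructor
    · rintro ⟨w, hw, rfl⟩; simpa using hw
    · intro h; exact ⟨_, h, by simp⟩
  have ha1 : ∀ v ∈ A, a v < M := by
    intro v hv
    by_cases h : v ∈ B'
    · simp only [a, if_pos h]
      have := hb1 _ ((hσB v).1 h); omega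
    · simp only [a, if_neg h]
      have := hq1 v (by simp [hv, h]); omega
  have ha2 : ∀ v ∈ A, ∀ w ∈ A, a v = a w → v = w := by
    intro v hv w hw h
    by_cases h1 : v ∈ B' <;> by_cases h2 : w ∈ B' <;> simp only [a, h1, h2, if_true, if_false] at h
    · exact σ.symm.injective (hb2 ((hσB v).1 h1) ((hσB w).1 h2) h)
    · have := hb1 _ ((hσB v).1 h1); omega
    · have := hb1 _ ((hσB w).1 h2); omega
    · exact hq2 (by simp [hv, h1]) (by simp [hw, h2]) (by omega)
  have ha3 : ∀ v ∈ B, a (σ v) = b v := by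
    intro v hv
    have : σ v ∈ B' := by rw [hσB]; simpa
    simp only [a, if_pos this]; simp
  let x : V → ℕ := fun v => if v ∈ A then a v else
    if σ.symm v ∈ A then 2 * M + k - 1 - a (σ.symm v) else M + k - 1 - b v
  have hx1 : ∀ v ∈ A, x v = a v := fun v hv => if_pos hv
  have hx2 : ∀ v, v ∉ A → σ.symm v ∈ A → x v = 2 * M + k - 1 - a (σ.symm v) := by
    intro v h1 h2; simp only [x, if_neg h1, if_pos h2]
  have hx3 : ∀ v, v ∉ A → σ.symm v ∉ A → x v = M + k - 1 - b v ∧ b v < k := by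
    intro v h1 h2; simp only [x, if_neg h1, if_neg h2]
    exact ⟨trivial, hb1 v ((hBm v).2 ⟨h1, h2⟩)⟩
  obtain ⟨e, he⟩ := toEquiv_aux x (by
    intro v w h
    by_cases h1 : v ∈ A <;> by_cases h2 : w ∈ A
    · rw [hx1 v h1, hx1 w h2] at h; exact ha2 v h1 w h2 h
    · have := ha1 v h1
      rw [hx1 v h1] at h
      by_cases h3 : σ.symm w ∈ A
      · have := ha1 _ h3
        rw [hx2 w h2 h3] at h; omega
      · have := hx3 w h2 h3; omega
    · have := ha1 w h2
      rw [hx1 w h2] at h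
      by_cases h3 : σ.symm v ∈ A
      · have := ha1 _ h3
        rw [hx2 v h1 h3] at h; omega
      · have := hx3 v h1 h3; omega
    · by_cases h3 : σ.symm v ∈ A <;> by_cases h4 : σ.symm w ∈ A
      · have t1 := ha1 _ h3
        have t2 := ha1 _ h4
        rw [hx2 v h1 h3, hx2 w h2 h4] at h
        exact σ.symm.injective (ha2 _ h3 _ h4 (by omega))
      · have t1 := ha1 _ h3
        have t2 := hx3 w h2 h4
        rw [hx2 v h1 h3] at h; omega
      · have t1 := ha1 _ h4
        have t2 := hx3 v h1 h3
        rw [hx2 w h2 h4] at h; omega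
      · have t1 := hx3 v h1 h3
        have t2 := hx3 w h2 h4
        exact hb2 ((hBm v).2 ⟨h1, h3⟩) ((hBm w).2 ⟨h2, h4⟩) (by omega)) (by
    intro v
    rw [hn]
    by_cases h1 : v ∈ A
    · have := ha1 v h1; rw [hx1 v h1]; omega
    · by_cases h3 : σ.symm v ∈ A
      · have := ha1 _ h3; rw [hx2 v h1 h3]; omega
      · have := hx3 v h1 h3; omega)
  refine ⟨e, M + k - 1, fun u => ?_⟩
  rw [he, he, hn]
  by_cases h1 : u ∈ A
  · have t1 := ha1 u h1
    rw [hx1 u h1]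
    have h2 : σ.symm u ∉ A := by
      intro h; have := hA1 _ h; simp [h1] at this
    by_cases h3 : σ.symm (σ.symm u) ∈ A
    · have t2 := ha1 _ h3
      rw [hx2 _ h2 h3]; omega
    · have t2 := hx3 _ h2 h3
      have t3 := ha3 _ ((hBm _).2 ⟨h2, h3⟩)
      rw [Equiv.apply_symm_apply] at t3
      omega
  · by_cases h3 : σ.symm u ∈ A
    · have t2 := ha1 _ h3
      rw [hx2 _ h1 h3, hx1 _ h3]; omega
    · have t2 := hx3 _ h1 h3
      have h4 : σ.symm (σ.symm u) ∈ A := by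
        by_contra h4
        have := hA2 _ h3 h4
        simp [h1] at this
      have t3 := ha1 _ h4
      rw [hx2 _ h3 h4]; omega

theorem balance_aux {V : Type*} [Fintype V] (h2 : 2 ≤ Fintype.card V) (σ : ℕ → Equiv.Perm V)
    (r : ℕ) (hσ : ∀ i < r, ∀ v, σ i v ≠ v) :
    ∃ x : ℕ → V ≃ Fin (Fintype.card V), ∃ c : ℕ, ∀ u,
      c ≤ ∑ i ∈ Finset.range r, ((x i u : ℕ) + x i ((σ i).symm u)) ∧
      ∑ i ∈ Finset.range r, ((x i u : ℕ) + x i ((σ i).symm u)) + 2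
        ≤ c + Fintype.card V + 2 * r := by
  induction r using Nat.twoStepInduction with
  | zero =>
    exact ⟨fun _ => Fintype.equivFin V, 0, fun u => by simpa using h2⟩
  | one =>
    obtain ⟨x, c, hx⟩ := single_aux (σ 0) (hσ 0 (by omega))
    refine ⟨fun _ => x, c, fun u => ?_⟩
    have := hx u
    simp only [Finset.sum_range_one]
    omega
  | more r ih _ =>
    obtain ⟨x, c, hx⟩ := ih (fun i hi => hσ i (by omega))
    obtain ⟨y, hy⟩ := band ((σ (r+1)).symm * σ r : Equiv.Perm V)
    refine ⟨fun i => if i = r then y else if i = r + 1 then y.trans Fin.revPerm else x i,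
      c + 2 * (Fintype.card V - 1) - 2, fun u => ?_⟩
    rw [Finset.sum_range_succ, Finset.sum_range_succ]
    have h1 : ∑ i ∈ Finset.range r, ((((if i = r then y else if i = r + 1 then y.trans Fin.revPerm else x i) u : Fin _) : ℕ) +
        ((if i = r then y else if i = r + 1 then y.trans Fin.revPerm else x i) ((σ i).symm u) : Fin _)) =
        ∑ i ∈ Finset.range r, ((x i u : ℕ) + x i ((σ i).symm u)) := by
      apply Finset.sum_congr rfl
      intro i hi
      have := Finset.mem_range.1 hi
      rw [if_neg (by omega), if_neg (by omega)]
    rw [h1]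
    have t1 := hx u
    have t2 := hy ((σ r).symm u)
    simp only [Equiv.Perm.mul_apply, Equiv.apply_symm_apply] at t2
    have t3 := (y u).2
    have t4 := (y ((σ r).symm u)).2
    have t5 := (y ((σ (r+1)).symm u)).2
    simp only [if_true, Nat.succ_ne_self, if_false, Equiv.trans_apply, Fin.revPerm_apply, Fin.val_rev]
    omega

theorem antimagic_of_index {W ι : Type*} [Finite W] [Fintype ι] [DecidableEq W]
    (G : SimpleGraph W) (Φ : ι → Sym2 W) (hinj : Function.Injective Φ)
    (hran : Set.range Φ = G.edgeSet) (N : ℕ) (lab : ι ≃ Fin N)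
    (h : ∀ u v : W, u ≠ v → (∑ t, if u ∈ Φ t then (lab t : ℕ) + 1 else 0) ≠
      (∑ t, if v ∈ Φ t then (lab t : ℕ) + 1 else 0)) : IsAntimagic G := by
  classical
  set f : Sym2 W → ℕ := Function.extend Φ (fun t => (lab t : ℕ) + 1) 0 with hf
  have hfa : ∀ t, f (Φ t) = (lab t : ℕ) + 1 := fun t => hinj.extend_apply _ _ t
  have hN : Nat.card G.edgeSet = N := by
    rw [← hran, Nat.card_range_of_injective hinj, Nat.card_congr lab, Nat.card_fin]
  refine ⟨f, ?_, ?_⟩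
  · rw [hN, ← hran]
    refine ⟨?_, ?_, ?_⟩
    · rintro _ ⟨t, rfl⟩
      rw [hfa]
      exact ⟨by omega, (lab t).2⟩
    · rintro _ ⟨t, rfl⟩ _ ⟨t', rfl⟩ h
      rw [hfa, hfa] at h
      have : lab t = lab t' := Fin.ext (by omega)
      rw [lab.injective this]
    · rintro k ⟨h1, h2⟩
      refine ⟨Φ (lab.symm ⟨k - 1, by omega⟩), ⟨_, rfl⟩, ?_⟩
      rw [hfa]; simp; omega
  · have key : ∀ u, vertexSum G f u = ∑ t, if u ∈ Φ t then (lab t : ℕ) + 1 else 0 := by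
      intro u
      rw [vertexSum, ← Finset.sum_filter]
      symm
      apply Finset.sum_bij (fun t _ => Φ t)
      · intro t ht
        simp only [Finset.mem_filter, Finset.mem_univ, true_and] at ht
        rw [Set.Finite.mem_toFinset]
        exact ⟨hran ▸ ⟨t, rfl⟩, ht⟩
      · intro t _ t' _ h; exact hinj h
      · intro e he
        rw [Set.Finite.mem_toFinset] at he
        have h1 := he.1
        rw [← hran] at h1
        obtain ⟨t, rfl⟩ := h1
        exact ⟨t, by simpa using he.2, rfl⟩
      · intro t _; exact (hfa t).symm
    intro u v huv
    rw [key, key]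
    exact h u v huv

/-- Any natural-valued statistic can be sorted by a bijection with `Fin n`. -/
theorem exists_sort {α : Type*} [Fintype α] (n : ℕ) (hn : Fintype.card α = n) (s : α → ℕ) :
    ∃ e : α ≃ Fin n, ∀ a b, e a < e b → s a ≤ s b := by
  subst hn
  let e0 := Fintype.equivFin α
  let τ := Tuple.sort (s ∘ e0.symm)
  have hm : Monotone ((s ∘ e0.symm) ∘ τ) := Tuple.monotone_sort _
  refine ⟨e0.trans τ.symm, fun a b h => ?_⟩
  have := hm h.le
  simpa using this

/-- If `G₁` is a `k₁`-regular graph with `k₁` even (not necessarily connected), `G₂` has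
maximum degree at most `k₂` and minimum degree at least `1`, and `k₁²/2 > k₂`, then the
Cartesian product `G₁ □ G₂` is antimagic. -/
theorem boxProd_antimagic_even {V₁ V₂ : Type} [Finite V₁] [Finite V₂]
    {n₁ k₁ k₂ : ℕ} (G₁ : SimpleGraph V₁) (G₂ : SimpleGraph V₂)
    (hn₁ : Nat.card V₁ = n₁)
    (hreg : ∀ v : V₁, Nat.card (G₁.neighborSet v) = k₁)
    (heven : Even k₁)
    (hmax : ∀ v : V₂, Nat.card (G₂.neighborSet v) ≤ k₂)
    (hmin : ∀ v : V₂, 1 ≤ Nat.card (G₂.neighborSet v))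
    (hineq : k₂ < k₁ ^ 2 / 2) :
    IsAntimagic (G₁ □ G₂) := by
  classical
  have := Fintype.ofFinite V₁
  have := Fintype.ofFinite V₂
  obtain ⟨r, hr⟩ := heven
  have hk : k₂ < 2 * r ^ 2 := by
    have : k₁ ^ 2 / 2 = 2 * r ^ 2 := by
      rw [hr, show (r + r) ^ 2 = 2 * (2 * r ^ 2) by ring]; simp
    omega
  have hrpos : 0 < r := by
    rcases Nat.eq_zero_or_pos r with h | h
    · subst h; simp at hk
    · exact h
  by_cases hV : Nonempty V₁
  swap
  · rw [not_nonempty_iff] at hV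
    refine antimagic_of_index (ι := Empty) _ (fun t => t.elim) (fun t => t.elim) ?_ 0
      (Equiv.equivOfIsEmpty _ _) (fun u => (hV.false u.1).elim)
    ext e
    induction e with
    | _ u v => exact (hV.false u.1).elim
  have hdeg : ∀ v, G₁.degree v = 2 * r := by
    intro v
    rw [← SimpleGraph.card_neighborSet_eq_degree, ← Nat.card_eq_fintype_card, hreg, hr]; ring
  have hdeg2 : ∀ v, G₂.degree v ≤ k₂ ∧ 1 ≤ G₂.degree v := by
    intro v
    rw [← SimpleGraph.card_neighborSet_eq_degree, ← Nat.card_eq_fintype_card]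
    exact ⟨hmax v, hmin v⟩
  obtain ⟨σ, hσ1, hσ2⟩ := petersen_aux G₁ r hrpos hdeg
  have hadj : ∀ i < r, ∀ v, G₁.Adj v (σ i v) := by
    intro i hi v
    rw [← SimpleGraph.mem_edgeSet, ← hσ2]
    exact ⟨(⟨i, hi⟩, v), rfl⟩
  have hcard2 : 2 ≤ Fintype.card V₁ := by
    obtain ⟨v⟩ := hV
    have := G₁.degree_lt_card_verts v
    rw [hdeg] at this; omega
  have hbal := balance_aux hcard2 σ r (fun i hi v => (hadj i hi v).ne')
  obtain ⟨n, hn⟩ : ∃ n, Fintype.card V₁ = n := ⟨_, rfl⟩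
  rw [hn] at hbal hcard2
  obtain ⟨x, c, hx⟩ := hbal
  set s : V₁ → ℕ := fun u => ∑ i ∈ Finset.range r, ((x i u : ℕ) + x i ((σ i).symm u)) with hs
  obtain ⟨rank, hrank⟩ := exists_sort n hn s
  obtain ⟨m, hm⟩ : ∃ m, Fintype.card G₂.edgeSet = m := ⟨_, rfl⟩
  let idx : G₂.edgeSet ≃ Fin m := Fintype.equivFinOfCardEq hm
  set C : V₂ → ℕ := fun v => ∑ e : G₂.edgeSet, if v ∈ e.1 then n * (idx e : ℕ) + 1 else 0 with hC
  obtain ⟨pos, hpos⟩ := exists_sort _ rfl C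
  let p := Fintype.card V₂
  let Φ : (G₂.edgeSet × V₁) ⊕ (V₂ × (Fin r × V₁)) → Sym2 (V₁ × V₂) := fun t => match t with
    | Sum.inl (e, u) => e.1.map (fun v => (u, v))
    | Sum.inr (v, (i, u)) => s((u, v), (σ i u, v))
  let lab1 : G₂.edgeSet × V₁ ≃ Fin (m * n) :=
    (Equiv.prodCongr idx rank).trans finProdFinEquiv
  let lab2 : Fin r × V₁ ≃ Fin (r * n) :=
    ((Equiv.prodShear (Equiv.refl (Fin r)) (fun i => x i)).trans finProdFinEquiv)
  let lab3 : V₂ × (Fin r × V₁) ≃ Fin (p * (r * n)) :=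
    (Equiv.prodCongr pos lab2).trans finProdFinEquiv
  let lab : (G₂.edgeSet × V₁) ⊕ (V₂ × (Fin r × V₁)) ≃ Fin (m * n + p * (r * n)) :=
    (Equiv.sumCongr lab1 lab3).trans finSumFinEquiv
  have hlabl : ∀ e u, (lab (Sum.inl (e, u)) : ℕ) = rank u + n * idx e := by
    intro e u
    simp [lab, lab1]
  have hlabr : ∀ v i u, (lab (Sum.inr (v, (i, u))) : ℕ) =
      m * n + ((x i u + n * i) + (r * n) * pos v) := by
    intro v i u
    simp [lab, lab2, lab3, Equiv.prodShear]
  have hsum : ∀ u v, (∑ t, if (u, v) ∈ Φ t then (lab t : ℕ) + 1 else 0) =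
      C v + G₂.degree v * rank u + s u + 2 * r * (r * n) * pos v
        + ∑ i ∈ Finset.range r, 2 * (m * n + n * i + 1) := by
    intro u v
    rw [Fintype.sum_sum_type]
    have h1 : (∑ t : G₂.edgeSet × V₁, if (u, v) ∈ Φ (Sum.inl t) then (lab (Sum.inl t) : ℕ) + 1 else 0)
        = C v + G₂.degree v * rank u := by
      have hmem : ∀ e u', (u, v) ∈ Φ (Sum.inl (e, u')) ↔ u' = u ∧ v ∈ e.1 := by
        intro e u'
        simp only [Φ, Sym2.mem_map, Prod.mk.injEq]
        constructor
        · rintro ⟨a, h1, h2, rfl⟩; exact ⟨h2, h1⟩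
        · rintro ⟨h1, h2⟩; exact ⟨v, h2, h1, rfl⟩
      have hd : G₂.degree v = ∑ e : G₂.edgeSet, if v ∈ e.1 then 1 else 0 := by
        rw [← Finset.card_filter, ← G₂.card_incidenceFinset_eq_degree v]
        symm
        apply Finset.card_bij (fun e _ => e.1)
        · intro e he
          simp only [Finset.mem_filter, Finset.mem_univ, true_and] at he
          simp [SimpleGraph.incidenceSet, he, e.2]
        · intro e _ e' _ h; exact Subtype.ext h
        · intro e he
          simp [SimpleGraph.incidenceSet] at he
          exact ⟨⟨e, he.1⟩, by simp [he.2], rfl⟩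
      rw [Fintype.sum_prod_type, hd, hC, Finset.sum_mul, ← Finset.sum_add_distrib]
      apply Finset.sum_congr rfl
      intro e _
      simp only [hmem, hlabl, ite_and]
      rw [Finset.sum_ite_eq' Finset.univ u]
      simp only [Finset.mem_univ, if_true]
      split_ifs <;> ring
    have h2 : (∑ t : V₂ × (Fin r × V₁), if (u, v) ∈ Φ (Sum.inr t) then (lab (Sum.inr t) : ℕ) + 1 else 0)
        = s u + 2 * r * (r * n) * pos v + ∑ i ∈ Finset.range r, 2 * (m * n + n * i + 1) := by
      have hterm : ∀ v' (i : Fin r) u',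
          (if (u, v) ∈ Φ (Sum.inr (v', (i, u'))) then (lab (Sum.inr (v', (i, u'))) : ℕ) + 1 else 0)
          = if v' = v then ((if u' = u then (lab (Sum.inr (v', (i, u'))) : ℕ) + 1 else 0) +
              (if u' = (σ i).symm u then (lab (Sum.inr (v', (i, u'))) : ℕ) + 1 else 0)) else 0 := by
        intro v' i u'
        have hne := (hadj i i.2 u').ne
        have e1 : (u' = (σ i).symm u) ↔ σ i u' = u := by
          rw [Equiv.eq_symm_apply]
        rw [e1]
        have e2 : (u, v) ∈ Φ (Sum.inr (v', (i, u'))) ↔ v' = v ∧ (u' = u ∨ σ i u' = u) := by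
          simp only [Φ, Sym2.mem_iff, Prod.mk.injEq]
          constructor
          · rintro (⟨rfl, rfl⟩ | ⟨rfl, rfl⟩) <;> simp
          · rintro ⟨rfl, rfl | rfl⟩ <;> simp
        simp only [e2]
        by_cases a1 : v' = v
        · by_cases a2 : u' = u
          · have a3 : σ i u' ≠ u := by rw [← a2]; exact hne.symm
            simp [a1, a2]
            intro h; rw [a2] at a3; exact absurd h a3
          · by_cases a3 : σ i u' = u <;> simp [a1, a2, a3]
        · simp [a1]
      rw [Fintype.sum_prod_type]
      simp only [Fintype.sum_prod_type, hterm]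
      rw [Finset.sum_eq_single v]
      · have hstep : ∀ i : Fin r, (∑ u' : V₁, if v = v then
            ((if u' = u then (lab (Sum.inr (v, (i, u'))) : ℕ) + 1 else 0) +
              (if u' = (σ i).symm u then (lab (Sum.inr (v, (i, u'))) : ℕ) + 1 else 0)) else 0) =
            (m * n + ((x i u : ℕ) + n * i + r * n * pos v) + 1) +
            (m * n + ((x i ((σ i).symm u) : ℕ) + n * i + r * n * pos v) + 1) := by
          intro i
          simp only [if_true]
          rw [Finset.sum_add_distrib, Finset.sum_ite_eq', Finset.sum_ite_eq']
          simp only [if_true, Finset.mem_univ, hlabr]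
        rw [Finset.sum_congr rfl (fun i _ => hstep i)]
        rw [Fin.sum_univ_eq_sum_range (fun i => (m * n + ((x i u : ℕ) + n * i + r * n * pos v) + 1) +
          (m * n + ((x i ((σ i).symm u) : ℕ) + n * i + r * n * pos v) + 1)) r]
        have : 2 * r * (r * n) * (pos v : ℕ) = ∑ i ∈ Finset.range r, 2 * (r * n) * (pos v : ℕ) := by
          simp; ring
        rw [hs, this, ← Finset.sum_add_distrib, ← Finset.sum_add_distrib]
        apply Finset.sum_congr rfl
        intro i _
        ring
      · intro v' _ h; simp [h]
      · simp
    rw [h1, h2]; ring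
  refine antimagic_of_index (G₁ □ G₂) Φ ?_ ?_ _ lab ?_
  · rintro (⟨e, u⟩ | ⟨v, i, u⟩) (⟨e', u'⟩ | ⟨v', i', u'⟩) h
    · obtain ⟨e, he⟩ := e
      obtain ⟨e', he'⟩ := e'
      induction e with | _ a b =>
      induction e' with | _ a' b' =>
      simp only [Φ, Sym2.map_mk, Sym2.eq_iff, Prod.mk.injEq] at h
      have : s(a, b) = s(a', b') ∧ u = u' := by
        rw [Sym2.eq_iff]; tauto
      obtain ⟨h1, rfl⟩ := this
      simp only [h1]
    · obtain ⟨e, he⟩ := e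
      induction e with | _ a b =>
      have := G₂.ne_of_adj ((SimpleGraph.mem_edgeSet _).1 he)
      simp only [Φ, Sym2.map_mk, Sym2.eq_iff, Prod.mk.injEq] at h
      exfalso; apply this
      rcases h with ⟨⟨_, h1⟩, _, h2⟩ | ⟨⟨_, h1⟩, _, h2⟩ <;> rw [h1, h2]
    · obtain ⟨e, he⟩ := e'
      induction e with | _ a b =>
      have := G₂.ne_of_adj ((SimpleGraph.mem_edgeSet _).1 he)
      simp only [Φ, Sym2.map_mk, Sym2.eq_iff, Prod.mk.injEq] at h
      exfalso; apply this
      rcases h with ⟨⟨_, h1⟩, _, h2⟩ | ⟨⟨_, h1⟩, _, h2⟩ <;> rw [← h1, ← h2]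
    · simp only [Φ, Sym2.eq_iff, Prod.mk.injEq] at h
      have : s(u, σ i u) = s(u', σ i' u') ∧ v = v' := by
        rw [Sym2.eq_iff]; tauto
      obtain ⟨h1, rfl⟩ := this
      have := hσ1 (a₁ := (i, u)) (a₂ := (i', u')) h1
      rw [this]
  · ext e
    induction e with | _ a b =>
    obtain ⟨a1, a2⟩ := a
    obtain ⟨b1, b2⟩ := b
    rw [SimpleGraph.mem_edgeSet, SimpleGraph.boxProd_adj]
    constructor
    · rintro ⟨⟨⟨e, he⟩, u⟩ | ⟨v, i, u⟩, h⟩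
      · induction e with | _ a b =>
        have hab := (SimpleGraph.mem_edgeSet _).1 he
        have hba := hab.symm
        simp only [Φ, Sym2.map_mk, Sym2.eq_iff, Prod.mk.injEq] at h
        rcases h with ⟨⟨rfl, rfl⟩, rfl, rfl⟩ | ⟨⟨rfl, rfl⟩, rfl, rfl⟩ <;> simp [hab, hba]
      · have hab := hadj i i.2 u
        have hba := hab.symm
        simp only [Φ, Sym2.eq_iff, Prod.mk.injEq] at h
        rcases h with ⟨⟨rfl, rfl⟩, rfl, rfl⟩ | ⟨⟨rfl, rfl⟩, rfl, rfl⟩ <;> simp [hab, hba]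
    · rintro (⟨h1, h2⟩ | ⟨h1, h2⟩)
      · simp only at h1 h2
        subst h2
        rw [← SimpleGraph.mem_edgeSet, ← hσ2] at h1
        obtain ⟨⟨i, u⟩, h⟩ := h1
        refine ⟨Sum.inr (a2, i, u), ?_⟩
        simp only [Φ, Sym2.eq_iff, Prod.mk.injEq] at h ⊢
        tauto
      · simp only at h1 h2
        subst h2
        exact ⟨Sum.inl (⟨s(a2, b2), h1⟩, a1), by simp [Φ]⟩
  · -- distinctness
    have hlt : ∀ u v u' v', pos v < pos v' →
        C v + G₂.degree v * rank u + s u + 2 * r * (r * n) * pos v <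
        C v' + G₂.degree v' * rank u' + s u' + 2 * r * (r * n) * pos v' := by
      intro u v u' v' h
      have t1 := hpos v v' h
      have t2 := (hx u).2
      have t3 := (hx u').1
      have t4 := (hdeg2 v).1
      have t5 : (rank u : ℕ) + 1 ≤ n := (rank u).2
      have t6 : (pos v : ℕ) + 1 ≤ pos v' := h
      have t7 : G₂.degree v * rank u + n + 2 * r < 2 * r * (r * n) + 2 := by
        have h1 : G₂.degree v + 1 ≤ 2 * r ^ 2 := by omega
        obtain ⟨D, hD⟩ : ∃ D, 2 * r ^ 2 = D + 1 := ⟨2 * r ^ 2 - 1, by omega⟩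
        obtain ⟨q, hq⟩ : ∃ q, n = q + 1 := ⟨n - 1, by omega⟩
        have h2 : G₂.degree v * rank u ≤ D * q := Nat.mul_le_mul (by omega) (by omega)
        have h3 : 2 * r * (r * n) = (D + 1) * (q + 1) := by rw [← hD, ← hq]; ring
        have h4 : r ≤ r ^ 2 := by nlinarith
        rw [h3]
        nlinarith
      have t8 : 2 * r * (r * n) * ((pos v : ℕ) + 1) ≤ 2 * r * (r * n) * pos v' :=
        Nat.mul_le_mul_left _ t6
      have t9 : 0 ≤ G₂.degree v' * (rank u' : ℕ) := Nat.zero_le _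
      rw [mul_add] at t8
      simp only [hs]
      omega
    have hlt2 : ∀ u u' v, rank u < rank u' →
        C v + G₂.degree v * rank u + s u < C v + G₂.degree v * rank u' + s u' := by
      intro u u' v h
      have t1 := hrank u u' h
      have t2 : G₂.degree v * rank u < G₂.degree v * rank u' :=
        Nat.mul_lt_mul_of_pos_left h (hdeg2 v).2
      omega
    rintro ⟨u, v⟩ ⟨u', v'⟩ hne
    rw [hsum, hsum]
    rcases lt_trichotomy (pos v) (pos v') with h | h | h
    · have := hlt u v u' v' h; omega
    · have hv : v = v' := pos.injective h
      subst hv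
      rcases lt_trichotomy (rank u) (rank u') with h | h | h
      · have := hlt2 u u' v h; omega
      · exact (hne (by rw [rank.injective h])).elim
      · have := hlt2 u' u v h; omega
    · have := hlt u' v' u v h; omega
end

section
/- Let G be a finite simple graph on n ≥ 3 vertices that is a disjoint union of cycles each of odd length (equivalently, G is 2-regular and every connected component of G is a cycle with an odd number of edges). Then G is ⌈2n/3⌉-approximately magic; moreover, there exists a bijection f from the edge set of G to {1, 2, ..., n} such that every vertex sum is at least ⌈2n/3⌉ + 1 and at most 2⌈2n/3⌉ + 1. -/
/-- Index set of (cycle, depth) pairs. -/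
def pairSet {k : ℕ} (p : Fin k → ℕ) : Finset (Σ _ : Fin k, ℕ) :=
  Finset.univ.sigma (fun c => Finset.range (p c))

def rInc {k : ℕ} (p : Fin k → ℕ) (c : Fin k) (d : ℕ) : ℕ :=
  ((pairSet p).filter (fun y => y.2 < d ∨ (y.2 = d ∧ y.1 ≤ c))).card

def rDec {k : ℕ} (p : Fin k → ℕ) (c : Fin k) (d : ℕ) : ℕ :=
  ((pairSet p).filter (fun y => y.2 < d ∨ (y.2 = d ∧ c ≤ y.1))).card

def rBelow {k : ℕ} (p : Fin k → ℕ) (d : ℕ) : ℕ :=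
  ((pairSet p).filter (fun y => y.2 < d)).card

lemma mem_pairSet {k : ℕ} (p : Fin k → ℕ) (y : Σ _ : Fin k, ℕ) :
    y ∈ pairSet p ↔ y.2 < p y.1 := by
  simp [pairSet]

lemma card_pairSet {k : ℕ} (p : Fin k → ℕ) : (pairSet p).card = ∑ c, p c := by
  simp [pairSet]

lemma rInc_le {k : ℕ} (p : Fin k → ℕ) (c : Fin k) (d : ℕ) : rInc p c d ≤ ∑ c, p c := by
  rw [← card_pairSet]; exact Finset.card_filter_le _ _

lemma rDec_le {k : ℕ} (p : Fin k → ℕ) (c : Fin k) (d : ℕ) : rDec p c d ≤ ∑ c, p c := by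
  rw [← card_pairSet]; exact Finset.card_filter_le _ _

lemma below_lt_rInc {k : ℕ} (p : Fin k → ℕ) (c : Fin k) (d : ℕ) (h : d < p c) :
    rBelow p d < rInc p c d := by
  apply Finset.card_lt_card
  rw [Finset.ssubset_iff_of_subset (by intro y; simp only [Finset.mem_filter]; tauto)]
  exact ⟨⟨c, d⟩, by simp [mem_pairSet, h], by simp⟩

lemma below_lt_rDec {k : ℕ} (p : Fin k → ℕ) (c : Fin k) (d : ℕ) (h : d < p c) :
    rBelow p d < rDec p c d := by
  apply Finset.card_lt_card
  rw [Finset.ssubset_iff_of_subset (by intro y; simp only [Finset.mem_filter]; tauto)]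
  exact ⟨⟨c, d⟩, by simp [mem_pairSet, h], by simp⟩

lemma rInc_le_below {k : ℕ} (p : Fin k → ℕ) (c : Fin k) {d e : ℕ} (h : d < e) :
    rInc p c d ≤ rBelow p e := by
  apply Finset.card_le_card
  intro y; simp only [Finset.mem_filter]
  rintro ⟨h1, h2⟩; exact ⟨h1, by omega⟩

lemma rDec_le_below {k : ℕ} (p : Fin k → ℕ) (c : Fin k) {d e : ℕ} (h : d < e) :
    rDec p c d ≤ rBelow p e := by
  apply Finset.card_le_card
  intro y; simp only [Finset.mem_filter]
  rintro ⟨h1, h2⟩; exact ⟨h1, by omega⟩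

lemma rInc_strict {k : ℕ} (p : Fin k → ℕ) {c c' : Fin k} {d : ℕ} (h : d < p c') (hc : c < c') :
    rInc p c d < rInc p c' d := by
  apply Finset.card_lt_card
  rw [Finset.ssubset_iff_of_subset (by
    intro y; simp only [Finset.mem_filter]
    rintro ⟨h1, h2 | h2⟩
    · exact ⟨h1, Or.inl h2⟩
    · exact ⟨h1, Or.inr ⟨h2.1, h2.2.trans hc.le⟩⟩)]
  exact ⟨⟨c', d⟩, by simp [mem_pairSet, h], by simp [hc]⟩

lemma rDec_strict {k : ℕ} (p : Fin k → ℕ) {c c' : Fin k} {d : ℕ} (h : d < p c) (hc : c < c') :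
    rDec p c' d < rDec p c d := by
  apply Finset.card_lt_card
  rw [Finset.ssubset_iff_of_subset (by
    intro y; simp only [Finset.mem_filter]
    rintro ⟨h1, h2 | h2⟩
    · exact ⟨h1, Or.inl h2⟩
    · exact ⟨h1, Or.inr ⟨h2.1, hc.le.trans h2.2⟩⟩)]
  exact ⟨⟨c, d⟩, by simp [mem_pairSet, h], by simp [hc]⟩

lemma card_le_fin {k : ℕ} (s : Finset (Σ _ : Fin k, ℕ)) (t : Finset (Fin k))
    (hs : ∀ y ∈ s, y.1 ∈ t) (h : ∀ y ∈ s, ∀ z ∈ s, y.1 = z.1 → y.2 = z.2) :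
    s.card ≤ t.card := by
  refine Finset.card_le_card_of_injOn (fun y => y.1) (fun y hy => hs y hy) ?_
  rintro ⟨a, b⟩ hy ⟨a', b'⟩ hz hh
  have := h _ hy _ hz hh
  simp_all

lemma rInc_zero {k : ℕ} (p : Fin k → ℕ) (c : Fin k) : rInc p c 0 ≤ c + 1 := by
  rw [← Fin.card_Iic]
  apply card_le_fin
  · intro y; simp
  · intro y hy z hz _; simp at hy hz; omega

lemma rDec_zero {k : ℕ} (p : Fin k → ℕ) (c : Fin k) : rDec p c 0 ≤ k - c := by
  rw [← Fin.card_Ici]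
  apply card_le_fin
  · intro y; simp
  · intro y hy z hz _; simp at hy hz; omega

lemma rInc_sub {k : ℕ} (p : Fin k → ℕ) (c : Fin k) (d : ℕ) :
    rInc p c d ≤ rInc p c (d+1) ∧ rInc p c (d+1) ≤ rInc p c d + k := by
  have hsub : ((pairSet p).filter (fun y => y.2 < d ∨ (y.2 = d ∧ y.1 ≤ c))) ⊆
    ((pairSet p).filter (fun y => y.2 < d+1 ∨ (y.2 = d+1 ∧ y.1 ≤ c))) := by
    intro y; simp only [Finset.mem_filter]
    rintro ⟨h1, h2⟩; exact ⟨h1, by omega⟩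
  refine ⟨Finset.card_le_card hsub, ?_⟩
  have h1 := Finset.card_sdiff_add_card_eq_card hsub
  have h2 : (((pairSet p).filter (fun y => y.2 < d+1 ∨ (y.2 = d+1 ∧ y.1 ≤ c))) \
    ((pairSet p).filter (fun y => y.2 < d ∨ (y.2 = d ∧ y.1 ≤ c)))).card ≤
      (Finset.univ : Finset (Fin k)).card := by
    apply card_le_fin
    · simp
    · intro y hy z hz h
      simp only [Finset.mem_sdiff, Finset.mem_filter] at hy hz
      obtain ⟨⟨ym, y1⟩, y2⟩ := hy
      obtain ⟨⟨zm, z1⟩, z2⟩ := hz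
      have y3 := not_and.1 y2 ym
      have z3 := not_and.1 z2 zm
      rw [h] at y1 y3
      omega
  rw [Finset.card_univ, Fintype.card_fin] at h2
  unfold rInc; omega

lemma rDec_sub {k : ℕ} (p : Fin k → ℕ) (c : Fin k) (d : ℕ) :
    rDec p c d ≤ rDec p c (d+1) ∧ rDec p c (d+1) ≤ rDec p c d + k := by
  have hsub : ((pairSet p).filter (fun y => y.2 < d ∨ (y.2 = d ∧ c ≤ y.1))) ⊆
    ((pairSet p).filter (fun y => y.2 < d+1 ∨ (y.2 = d+1 ∧ c ≤ y.1))) := by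
    intro y; simp only [Finset.mem_filter]
    rintro ⟨h1, h2⟩; exact ⟨h1, by omega⟩
  refine ⟨Finset.card_le_card hsub, ?_⟩
  have h1 := Finset.card_sdiff_add_card_eq_card hsub
  have h2 : (((pairSet p).filter (fun y => y.2 < d+1 ∨ (y.2 = d+1 ∧ c ≤ y.1))) \
    ((pairSet p).filter (fun y => y.2 < d ∨ (y.2 = d ∧ c ≤ y.1)))).card ≤
      (Finset.univ : Finset (Fin k)).card := by
    apply card_le_fin
    · simp
    · intro y hy z hz h
      simp only [Finset.mem_sdiff, Finset.mem_filter] at hy hz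
      obtain ⟨⟨ym, y1⟩, y2⟩ := hy
      obtain ⟨⟨zm, z1⟩, z2⟩ := hz
      have y3 := not_and.1 y2 ym
      have z3 := not_and.1 z2 zm
      rw [h] at y1 y3
      omega
  rw [Finset.card_univ, Fintype.card_fin] at h2
  unfold rDec; omega

lemma below_succ {k : ℕ} (p : Fin k → ℕ) (d : ℕ) : rBelow p (d+1) ≤ rBelow p d + k := by
  have hsub : ((pairSet p).filter (fun y => y.2 < d)) ⊆
    ((pairSet p).filter (fun y => y.2 < d+1)) := by
    intro y; simp only [Finset.mem_filter]
    rintro ⟨h1, h2⟩; exact ⟨h1, by omega⟩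
  have h1 := Finset.card_sdiff_add_card_eq_card hsub
  have h2 : (((pairSet p).filter (fun y => y.2 < d+1)) \
    ((pairSet p).filter (fun y => y.2 < d))).card ≤
      (Finset.univ : Finset (Fin k)).card := by
    apply card_le_fin
    · simp
    · intro y hy z hz h
      simp only [Finset.mem_sdiff, Finset.mem_filter] at hy hz
      obtain ⟨⟨ym, y1⟩, y2⟩ := hy
      obtain ⟨⟨zm, z1⟩, z2⟩ := hz
      have y3 := not_and.1 y2 ym
      have z3 := not_and.1 z2 zm
      omega
  rw [Finset.card_univ, Fintype.card_fin] at h2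
  unfold rBelow; omega

/-- The label of the edge at position `j` of cycle `c`. -/
def lab {k : ℕ} (p : Fin k → ℕ) (c : Fin k) (j : ℕ) : ℕ :=
  if j = 0 then (∑ c, p c) + c + 1
  else if j ≤ p c then
    (if (j - 1) % 2 = 0 then (∑ c, p c) + 1 - rInc p c (j - 1)
      else (∑ c, p c) + k + rInc p c (j - 1))
  else
    (if (2 * p c - j) % 2 = 0 then (∑ c, p c) + k + rDec p c (2 * p c - j)
      else (∑ c, p c) + 1 - rDec p c (2 * p c - j))

/-- depth-unified description of a rank in the low class (`b = true`) or high class -/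
def rk {k : ℕ} (p : Fin k → ℕ) (low : Prop) [Decidable low] (c : Fin k) (d : ℕ) : ℕ :=
  if (d % 2 = 0 ↔ low) then rInc p c d else rDec p c d

lemma rk_bounds {k : ℕ} (p : Fin k → ℕ) (low : Prop) [Decidable low] (c : Fin k) (d : ℕ)
    (h : d < p c) : rBelow p d < rk p low c d ∧ rk p low c d ≤ rBelow p (d+1) ∧
      rk p low c d ≤ ∑ c, p c := by
  unfold rk
  split_ifs
  · exact ⟨below_lt_rInc p c d h, rInc_le_below p c (by omega), rInc_le p c d⟩
  · exact ⟨below_lt_rDec p c d h, rDec_le_below p c (by omega), rDec_le p c d⟩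

lemma below_mono {k : ℕ} (p : Fin k → ℕ) {d e : ℕ} (h : d ≤ e) : rBelow p d ≤ rBelow p e := by
  apply Finset.card_le_card
  intro y; simp only [Finset.mem_filter]
  rintro ⟨h1, h2⟩; exact ⟨h1, by omega⟩

lemma rk_inj {k : ℕ} (p : Fin k → ℕ) (low : Prop) [Decidable low] {c c' : Fin k} {d d' : ℕ}
    (h : d < p c) (h' : d' < p c') (he : rk p low c d = rk p low c' d') : c = c' ∧ d = d' := by
  have b1 := rk_bounds p low c d h
  have b2 := rk_bounds p low c' d' h'
  have hd : d = d' := by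
    rcases lt_trichotomy d d' with hh | hh | hh
    · have := below_mono p (show d + 1 ≤ d' from hh); omega
    · exact hh
    · have := below_mono p (show d' + 1 ≤ d from hh); omega
  subst hd
  refine ⟨?_, rfl⟩
  unfold rk at he
  rcases lt_trichotomy c c' with hh | hh | hh
  · have h1 := rInc_strict p h' hh
    have h2 := rDec_strict p h hh
    split_ifs at he <;> omega
  · exact hh
  · have h1 := rInc_strict p h hh
    have h2 := rDec_strict p h' hh
    split_ifs at he <;> omega

/-- Classification of labels. -/
lemma lab_cases {k : ℕ} (p : Fin k → ℕ) (c : Fin k) (j : ℕ) (hj : j < 2 * p c + 1) :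
    (j = 0 ∧ lab p c j = (∑ c, p c) + c + 1) ∨
    (∃ d, d < p c ∧ ((d % 2 = 0 ∧ j = d + 1) ∨ (d % 2 = 1 ∧ j + d = 2 * p c)) ∧
      lab p c j = (∑ c, p c) + 1 - rk p True c d) ∨
    (∃ d, d < p c ∧ ((d % 2 = 1 ∧ j = d + 1) ∨ (d % 2 = 0 ∧ j + d = 2 * p c)) ∧
      lab p c j = (∑ c, p c) + k + rk p False c d) := by
  unfold lab rk
  by_cases h0 : j = 0
  · simp [h0]
  right
  rw [if_neg h0]
  by_cases h1 : j ≤ p c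
  · rw [if_pos h1]
    by_cases h2 : (j - 1) % 2 = 0
    · left
      exact ⟨j - 1, by omega, by omega, by simp [h2]⟩
    · right
      exact ⟨j - 1, by omega, by omega, by simp [h2]⟩
  · rw [if_neg h1]
    by_cases h2 : (2 * p c - j) % 2 = 0
    · right
      exact ⟨2 * p c - j, by omega, by omega, by simp [h2]⟩
    · left
      exact ⟨2 * p c - j, by omega, by omega, by simp [h2]⟩

lemma lab_mem {k : ℕ} (p : Fin k → ℕ) (c : Fin k) (j : ℕ) (hj : j < 2 * p c + 1) :
    1 ≤ lab p c j ∧ lab p c j ≤ 2 * (∑ c, p c) + k := by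
  have hc := c.2
  rcases lab_cases p c j hj with ⟨_, h⟩ | ⟨d, hd, _, h⟩ | ⟨d, hd, _, h⟩
  · omega
  · have := rk_bounds p True c d hd; omega
  · have := rk_bounds p False c d hd; omega

lemma lab_inj {k : ℕ} (p : Fin k → ℕ) (c c' : Fin k) (j j' : ℕ) (hj : j < 2 * p c + 1)
    (hj' : j' < 2 * p c' + 1) (he : lab p c j = lab p c' j') : c = c' ∧ j = j' := by
  have hc := c.2
  have hc' := c'.2
  rcases lab_cases p c j hj with ⟨e, h⟩ | ⟨d, hd, e, h⟩ | ⟨d, hd, e, h⟩ <;>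
  rcases lab_cases p c' j' hj' with ⟨e', h'⟩ | ⟨d', hd', e', h'⟩ | ⟨d', hd', e', h'⟩
  · exact ⟨Fin.ext (by omega), by omega⟩
  · have := rk_bounds p True c' d' hd'; omega
  · have := rk_bounds p False c' d' hd'; omega
  · have := rk_bounds p True c d hd; omega
  · have := rk_bounds p True c' d' hd'
    have := rk_bounds p True c d hd
    obtain ⟨rfl, rfl⟩ := rk_inj p True hd hd' (by omega)
    exact ⟨rfl, by omega⟩
  · have := rk_bounds p False c' d' hd'
    have := rk_bounds p True c d hd; omega
  · have := rk_bounds p False c d hd; omega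
  · have := rk_bounds p True c' d' hd'
    have := rk_bounds p False c d hd; omega
  · obtain ⟨rfl, rfl⟩ := rk_inj p False hd hd' (by omega)
    exact ⟨rfl, by omega⟩

lemma lab_sum {k : ℕ} (p : Fin k → ℕ) (hp : ∀ c, 1 ≤ p c) (c : Fin k) (j j' : ℕ)
    (hj : j < 2 * p c + 1)
    (hj' : (j < 2 * p c ∧ j' = j + 1) ∨ (j = 2 * p c ∧ j' = 0)) (n : ℕ)
    (hn : n = 2 * (∑ c, p c) + k) :
    (2 * n + 2) / 3 + 1 ≤ lab p c j + lab p c j' ∧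
    lab p c j + lab p c j' ≤ 2 * ((2 * n + 2) / 3) + 1 := by
  have hc := c.2
  have hpc := hp c
  have hk : k ≤ ∑ c, p c := by
    have := Finset.sum_le_sum (s := Finset.univ) (fun c _ => hp c)
    simpa using this
  have z1 := rInc_zero p c
  have z2 := rDec_zero p c
  rcases hj' with ⟨h1, rfl⟩ | ⟨rfl, rfl⟩
  · by_cases h0 : j = 0
    · subst h0
      have := rInc_le p c 0
      simp [lab, hpc]
      omega
    by_cases hlt : j < p c
    · obtain ⟨d, rfl⟩ : ∃ d, j = d + 1 := ⟨j - 1, by omega⟩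
      have a1 := rInc_sub p c d
      have a2 := rInc_le p c d
      have a3 := rInc_le p c (d+1)
      have e1 : d + 1 ≤ p c := by omega
      have e2 : d + 1 + 1 ≤ p c := by omega
      simp only [lab, e1, e2, Nat.add_sub_cancel, if_true, Nat.succ_ne_zero, if_false]
      split_ifs <;> omega
    by_cases heq : j = p c
    · obtain ⟨d, hd⟩ : ∃ d, p c = d + 1 := ⟨p c - 1, by omega⟩
      have hs := below_succ p d
      have a0 := below_lt_rInc p c d (by omega)
      have a1 := below_lt_rDec p c d (by omega)
      have a2 := rInc_le_below p c (show d < d + 1 by omega)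
      have a3 := rDec_le_below p c (show d < d + 1 by omega)
      have a4 := rInc_le p c d
      have a5 := rDec_le p c d
      have e1 : 2 * (d + 1) - (d + 1 + 1) = d := by omega
      have e2 : ¬ (d + 1 + 1 ≤ d + 1) := by omega
      subst heq
      simp only [lab, hd, e1, e2, le_refl, Nat.add_sub_cancel, if_true, Nat.succ_ne_zero, if_false]
      split_ifs <;> omega
    · obtain ⟨d, hd⟩ : ∃ d, 2 * p c - (j + 1) = d := ⟨_, rfl⟩
      have hd' : 2 * p c - j = d + 1 := by omega
      have a1 := rDec_sub p c d
      have a2 := rDec_le p c d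
      have a3 := rDec_le p c (d+1)
      have e1 : ¬ (j ≤ p c) := by omega
      have e2 : ¬ (j + 1 ≤ p c) := by omega
      simp only [lab, e1, e2, h0, hd, hd', Nat.succ_ne_zero, if_false]
      split_ifs <;> omega
  · have := rDec_le p c 0
    have e1 : ¬ (2 * p c ≤ p c) := by omega
    have e2 : ¬ (2 * p c = 0) := by omega
    have e3 : 2 * p c - 2 * p c = 0 := by omega
    simp only [lab, e1, e2, e3, if_false, if_true, Nat.zero_mod]
    omega

lemma cycle_struct {V : Type} [Finite V] (G : SimpleGraph V)
    (hreg : ∀ v : V, Nat.card (G.neighborSet v) = 2) (c : G.ConnectedComponent) :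
    ∃ γ : ℕ → V, 3 ≤ Nat.card c.supp ∧ γ (Nat.card c.supp) = γ 0 ∧
      (∀ i < Nat.card c.supp, ∀ j < Nat.card c.supp, γ i = γ j → i = j) ∧
      (∀ v, G.connectedComponentMk v = c ↔ ∃ i < Nat.card c.supp, γ i = v) ∧
      (∀ i < Nat.card c.supp, G.Adj (γ i) (γ (i+1))) := by
  classical
  obtain ⟨v, hv⟩ := c.nonempty_supp
  have hcyc : G.IsCycles := fun v _ => hreg v
  have hne : (G.neighborSet v).Nonempty := by
    apply Set.nonempty_of_ncard_ne_zero
    have := hreg v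
    rw [Nat.card_coe_set_eq] at this; omega
  obtain ⟨w, hw, hs⟩ := hcyc.exists_cycle_toSubgraph_verts_eq_connectedComponentSupp hv hne
  have h3 := hw.three_le_length
  have hmem : ∀ u, G.connectedComponentMk u = c ↔ ∃ i < w.length, w.getVert i = u := by
    intro u
    rw [← SimpleGraph.ConnectedComponent.mem_supp_iff, ← hs, SimpleGraph.Walk.mem_verts_toSubgraph,
      SimpleGraph.Walk.mem_support_iff_exists_getVert]
    constructor
    · rintro ⟨i, h1, h2⟩
      rcases h2.lt_or_eq with h | h
      · exact ⟨i, h, h1⟩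
      · refine ⟨0, by omega, ?_⟩
        rw [← h1, h]; simp
    · rintro ⟨i, h1, h2⟩
      exact ⟨i, h2, h1.le⟩
  have hinj : ∀ i < w.length, ∀ j < w.length, w.getVert i = w.getVert j → i = j := by
    intro i hi j hj h
    exact hw.getVert_injOn' (by simp; omega) (by simp; omega) h
  have hlen : Nat.card c.supp = w.length := by
    have : c.supp = w.getVert '' (Finset.range w.length : Set ℕ) := by
      ext u
      rw [SimpleGraph.ConnectedComponent.mem_supp_iff, hmem]
      simp
    rw [this, Nat.card_coe_set_eq, Set.InjOn.ncard_image, Set.ncard_coe_finset, Finset.card_range]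
    intro i hi j hj h
    exact hinj i (by simpa using hi) j (by simpa using hj) h
  rw [hlen]
  refine ⟨w.getVert, h3, by simp, hinj, hmem, fun i hi => w.adj_getVert_succ hi⟩

theorem disjoint_odd_cycles_approx_magic {V : Type} [Finite V] {n : ℕ}
    (G : SimpleGraph V) (hn : Nat.card V = n) (hn3 : 3 ≤ n)
    (hreg : ∀ v : V, Nat.card (G.neighborSet v) = 2)
    (hodd : ∀ c : G.ConnectedComponent, Odd (Nat.card c.supp)) :
    ∃ f : Sym2 V → ℕ,
      Set.BijOn f G.edgeSet (Set.Icc 1 n) ∧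
      ∀ v : V,
        vertexSum G f v ∈ Set.Icc ((2 * n + 2) / 3 + 1) (2 * ((2 * n + 2) / 3) + 1) := by
  classical
  have := Fintype.ofFinite V
  have : Finite G.ConnectedComponent := inferInstance
  have := Fintype.ofFinite G.ConnectedComponent
  obtain ⟨k, ⟨φ⟩⟩ : ∃ k, Nonempty (G.ConnectedComponent ≃ Fin k) :=
    ⟨_, ⟨Fintype.equivFin _⟩⟩
  choose γ hL3 hL0 hinj hmem hadj using cycle_struct G hreg
  choose q hq using hodd
  -- `p` is indexed by `Fin k`
  let p : Fin k → ℕ := fun i => q (φ.symm i)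
  have hpq : ∀ c, p (φ c) = q c := by intro c; simp [p]
  have hp : ∀ i, 1 ≤ p i := by
    intro i
    have h1 := hL3 (φ.symm i)
    have h2 := hq (φ.symm i)
    simp only [p]; omega
  let cm : V → G.ConnectedComponent := G.connectedComponentMk
  have hpos : ∀ v, ∃ i < Nat.card (cm v).supp, γ (cm v) i = v := fun v => (hmem (cm v) v).1 rfl
  choose pos pos_lt pos_eq using hpos
  have hcm : ∀ c, ∀ i < Nat.card c.supp, cm (γ c i) = c := fun c i hi =>
    (hmem c _).2 ⟨i, hi, rfl⟩
  have hpos_γ : ∀ c, ∀ i < Nat.card c.supp, pos (γ c i) = i := by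
    intro c i hi
    have h1 := pos_lt (γ c i)
    have h2 := pos_eq (γ c i)
    rw [hcm c i hi] at h1 h2
    exact hinj c _ h1 _ hi h2
  have hext : ∀ u v, cm u = cm v → pos u = pos v → u = v := by
    intro u v h1 h2
    rw [← pos_eq u, ← pos_eq v, h1, h2]
  let succ : V → V := fun v => γ (cm v) (pos v + 1)
  have succ_adj : ∀ v, G.Adj v (succ v) := by
    intro v
    have := hadj (cm v) (pos v) (pos_lt v)
    rwa [pos_eq v] at this
  have cm_succ : ∀ v, cm (succ v) = cm v := fun v =>
    (SimpleGraph.ConnectedComponent.connectedComponentMk_eq_of_adj (succ_adj v)).symm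
  have pos_succ : ∀ v, (pos v + 1 < Nat.card (cm v).supp ∧ pos (succ v) = pos v + 1) ∨
      (pos v + 1 = Nat.card (cm v).supp ∧ pos (succ v) = 0) := by
    intro v
    have h3 := hL3 (cm v)
    rcases Nat.lt_or_eq_of_le (Nat.succ_le_of_lt (pos_lt v)) with h | h
    · exact Or.inl ⟨h, hpos_γ _ _ h⟩
    · refine Or.inr ⟨h, ?_⟩
      have : succ v = γ (cm v) 0 := by rw [← hL0 (cm v), ← h]
      rw [this, hpos_γ _ _ (by omega)]
  have hpred : ∀ v, ∃ u, succ u = v := by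
    intro v
    have h3 := hL3 (cm v)
    have hv := pos_lt v
    by_cases h0 : pos v = 0
    · refine ⟨γ (cm v) (Nat.card (cm v).supp - 1), ?_⟩
      simp only [succ]
      rw [hcm _ _ (by omega), hpos_γ _ _ (by omega), Nat.sub_add_cancel (by omega), hL0, ← h0]
      exact pos_eq v
    · refine ⟨γ (cm v) (pos v - 1), ?_⟩
      simp only [succ]
      rw [hcm _ _ (by omega), hpos_γ _ _ (by omega), Nat.sub_add_cancel (by omega)]
      exact pos_eq v
  have hss : ∀ v, succ (succ v) ≠ v := by
    intro v h
    have h3 := hL3 (cm v)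
    have h1 := pos_succ v
    have h2 := pos_succ (succ v)
    rw [cm_succ, h] at h2
    omega
  have hnb : ∀ u w, G.Adj (succ u) w → w = u ∨ w = succ (succ u) := by
    intro u w hw
    have hsub : ({u, succ (succ u)} : Set V) ⊆ G.neighborSet (succ u) := by
      rintro x (rfl | rfl)
      · exact (succ_adj x).symm
      · exact succ_adj _
    have hc : ({u, succ (succ u)} : Set V) = G.neighborSet (succ u) := by
      apply Set.eq_of_subset_of_ncard_le hsub
      rw [Set.ncard_pair (hss u).symm, ← Nat.card_coe_set_eq, hreg]
    have : w ∈ ({u, succ (succ u)} : Set V) := by rw [hc]; exact hw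
    simpa using this
  let E : V → Sym2 V := fun v => s(v, succ v)
  have hEinj : Function.Injective E := by
    intro a b h
    simp only [E, Sym2.eq_iff] at h
    rcases h with h | h
    · exact h.1
    · exfalso
      apply hss b
      rw [← h.1, h.2]
  let l : V → ℕ := fun v => lab p (φ (cm v)) (pos v)
  have hpos2 : ∀ v, pos v < 2 * p (φ (cm v)) + 1 := by
    intro v
    rw [hpq, ← hq]; exact pos_lt v
  have hl_inj : Function.Injective l := by
    intro u v h
    have := lab_inj p _ _ _ _ (hpos2 u) (hpos2 v) h
    exact hext u v (φ.injective this.1) this.2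
  have hcard : n = 2 * (∑ i, p i) + k := by
    have e : V ≃ Σ c : G.ConnectedComponent, c.supp :=
      (Equiv.sigmaFiberEquiv cm).symm
    rw [← hn, Nat.card_congr e, Nat.card_sigma]
    simp only [hq]
    rw [Finset.sum_add_distrib, ← Finset.mul_sum, ← Equiv.sum_comp φ p]
    simp only [hpq]
    simp [Fintype.card_congr φ]
  have hl_mem : ∀ v, l v ∈ Finset.Icc 1 n := by
    intro v
    rw [Finset.mem_Icc, hcard]
    exact lab_mem p _ _ (hpos2 v)
  have hl_img : Finset.univ.image l = Finset.Icc 1 n := by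
    apply Finset.eq_of_subset_of_card_le
    · intro x hx
      obtain ⟨v, -, rfl⟩ := Finset.mem_image.1 hx
      exact hl_mem v
    · rw [Finset.card_image_of_injective _ hl_inj, Finset.card_univ, Nat.card_Icc,
        ← hn, Nat.card_eq_fintype_card]; omega
  let f : Sym2 V → ℕ := Function.extend E l 0
  have hf : ∀ v, f (E v) = l v := fun v => hEinj.extend_apply l 0 v
  have hEmem : ∀ v, E v ∈ G.edgeSet := fun v => succ_adj v
  have hEsurj : ∀ u w, G.Adj (succ u) w → s(succ u, w) = E u ∨ s(succ u, w) = E (succ u) := by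
    intro u w h
    rcases hnb u w h with rfl | rfl
    · left; exact Sym2.eq_swap
    · right; rfl
  refine ⟨f, ⟨?_, ?_, ?_⟩, ?_⟩
  · intro e he
    induction e with | _ a b
    obtain ⟨u, rfl⟩ := hpred a
    rcases hEsurj u b he with h | h <;> rw [h, hf] <;> simpa using hl_mem _
  · intro e he e' he' hee
    induction e with | _ a b
    induction e' with | _ a' b'
    obtain ⟨u, rfl⟩ := hpred a
    obtain ⟨u', rfl⟩ := hpred a'
    rcases hEsurj u b he with h | h <;> rcases hEsurj u' b' he' with h' | h' <;>
      rw [h, h', hf, hf] at hee <;> rw [h, h', hl_inj hee]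
  · intro x hx
    have hx' : x ∈ Finset.univ.image l := by rw [hl_img]; simpa using hx
    obtain ⟨v, -, rfl⟩ := Finset.mem_image.1 hx'
    exact ⟨E v, hEmem v, hf v⟩
  · intro v
    obtain ⟨u, rfl⟩ := hpred v
    have hinc : (G.incidenceSet (succ u)).toFinite.toFinset = {E u, E (succ u)} := by
      ext e
      simp only [Set.Finite.mem_toFinset, Finset.mem_insert, Finset.mem_singleton]
      constructor
      · rintro ⟨he, hv⟩
        obtain ⟨w, rfl⟩ := hv
        exact hEsurj u w he
      · rintro (rfl | rfl)
        · exact ⟨hEmem _, Sym2.mem_mk_right _ _⟩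
        · exact ⟨hEmem _, Sym2.mem_mk_left _ _⟩
    have hne : E u ≠ E (succ u) := fun h => (succ_adj u).ne (hEinj h)
    unfold vertexSum
    rw [hinc, Finset.sum_pair hne, hf, hf]
    simp only [l]
    rw [cm_succ]
    have h2 := hpos2 u
    apply lab_sum p hp (φ (cm u)) (pos u) (pos (succ u)) h2 _ n hcard
    have h1 := pos_succ u
    rw [hq, ← hpq] at h1
    omega
end
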